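/- Let n be a positive integer with n ≡ 4 (mod 8), let τ, A, A_C be integers, and set Q = (−B_{n/2} − B_{n/4})/(B_{n/2}·B_{n/4}) ∈ ℚ. If the equation A_C = 2n·(1 + 1/B_{n/2} + ((2^{n-1}−1)/(2^{n/2}−1)^2)·Q)·A + (1/(2^{n/2}−1)^2)·Q·(n·τ/2^n) holds in ℚ, then A_C is even if and only if the rational number ((B_{n/2} + B_{n/4})/(B_{n/2}·B_{n/4}))·(τ/2^{n−2}) is congruent to 0 modulo 2 as a 2-adic integer, i.e., if and only if (1/2)·((B_{n/2} + B_{n/4})/(B_{n/2}·B_{n/4}))·(τ/2^{n−2}) has odd denominator in lowest terms. -/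

import Mathlib

/-- The topologists' Bernoulli number `B_k`: the absolute value of the `(2k)`-th
Bernoulli number, so `topB 1 = 1/6`, `topB 2 = 1/30`, etc. -/
def topB (k : ℕ) : ℚ := |bernoulli (2 * k)|

/-!
By von Staudt–Clausen, `B_{n/2}` and `B_{n/4}` have `2`-adic valuation exactly `-1`, so their
inverses, and hence `Q`, lie in the localization `ℤ_(2)`. Halving the equation for `A_C` therefore
shows that `A_C / 2` differs by an element of `ℤ_(2)` from
`(n/4) / (2^(n/2) - 1)^2 * (1/2 * Q * (τ / 2^(n-2)))`. The first factor is a unit of `ℤ_(2)`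
because `n/4` is odd, so it does not affect integrality.
-/

open WithZero

section Localization

variable {p : ℕ} [Fact p.Prime]

/-- The localization `ℤ_(p)` of `ℤ` at the prime `p`, i.e. the rational `p`-adic integers,
encoded as the unit ball of the `p`-adic valuation on `ℚ`. -/
abbrev ratPadicIntegers (p : ℕ) [Fact p.Prime] : Subring ℚ :=
  (Rat.padicValuation p).integer

lemma mem_ratPadicIntegers_two_iff_odd_den {x : ℚ} : x ∈ ratPadicIntegers 2 ↔ Odd x.den := by
  rw [Valuation.mem_integer_iff, Rat.padicValuation_le_one_iff, ← even_iff_two_dvd,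
    Nat.not_even_iff_odd]

lemma mul_mem_ratPadicIntegers_iff {u x : ℚ} (hu : Rat.padicValuation p u = 1) :
    u * x ∈ ratPadicIntegers p ↔ x ∈ ratPadicIntegers p := by
  simp only [Valuation.mem_integer_iff, map_mul, hu, one_mul]

lemma padicValuation_natCast_eq_one_iff {a : ℕ} :
    Rat.padicValuation p (a : ℚ) = 1 ↔ ¬ p ∣ a := by
  rw [← Int.cast_natCast, Rat.padicValuation_cast, Int.padicValuation_eq_one_iff,
    Int.natCast_dvd_natCast]

lemma one_div_prime_mem_ratPadicIntegers {q : ℕ} (hq : q.Prime) (hqp : q ≠ p) :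
    (1 : ℚ) / q ∈ ratPadicIntegers p := by
  have hq_unit : Rat.padicValuation p (q : ℚ) = 1 := by
    rw [padicValuation_natCast_eq_one_iff, Nat.prime_dvd_prime_iff_eq Fact.out hq]
    exact hqp.symm
  rw [Valuation.mem_integer_iff, map_div₀, map_one, hq_unit, div_one]

lemma padicValuation_self_lt_one : Rat.padicValuation p (p : ℚ) < 1 := by
  rw [Rat.padicValuation_self, ← exp_zero, exp_lt_exp]
  exact neg_one_lt_zero

lemma padicValuation_prime_pow_sub_one {k : ℕ} (hk : k ≠ 0) :
    Rat.padicValuation p ((p : ℚ) ^ k - 1) = 1 := by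
  rw [Valuation.map_sub_swap]
  apply Valuation.map_one_sub_of_lt
  rw [map_pow]
  exact pow_lt_one₀ zero_le padicValuation_self_lt_one hk

lemma padicValuation_natCast_div_prime_pow_sub_one_pow {a k : ℕ} (m : ℕ) (ha : ¬ p ∣ a)
    (hk : k ≠ 0) : Rat.padicValuation p (a / ((p : ℚ) ^ k - 1) ^ m) = 1 := by
  rw [map_div₀, map_pow, padicValuation_natCast_eq_one_iff.mpr ha,
    padicValuation_prime_pow_sub_one hk, one_pow, div_one]

lemma intCast_div_prime_mem_ratPadicIntegers_iff {z : ℤ} :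
    (z : ℚ) / p ∈ ratPadicIntegers p ↔ (p : ℤ) ∣ z := by
  have hp : (p : ℚ) ≠ 0 := mod_cast (Fact.out : p.Prime).ne_zero
  constructor
  · intro h
    rw [← Int.padicValuation_lt_one_iff, ← Rat.padicValuation_cast, ← mul_div_cancel₀ (z : ℚ) hp,
      map_mul]
    exact mul_lt_one_of_lt_of_le padicValuation_self_lt_one h
  · rintro ⟨w, rfl⟩
    rw [Int.cast_mul, Int.cast_natCast, mul_div_cancel_left₀ _ hp]
    exact intCast_mem _ w

end Localization

section Bernoulli

variable {p : ℕ} [Fact p.Prime] {k l : ℕ}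

lemma padicValuation_bernoulli_two_mul (hk : k ≠ 0) (hp : p - 1 ∣ 2 * k) :
    Rat.padicValuation p (bernoulli (2 * k)) = exp 1 := by
  obtain ⟨T, hT⟩ := Bernoulli.vonStaudt_clausen k
  set P := (Finset.range (2 * k + 2)).filter fun q ↦ q.Prime ∧ (q - 1) ∣ 2 * k
  have hpP : p ∈ P := by
    have := Nat.le_of_dvd (by omega) hp
    exact Finset.mem_filter.mpr ⟨Finset.mem_range.mpr (by omega), Fact.out, hp⟩
  have h_sum : ∑ q ∈ P.erase p, (1 : ℚ) / q ∈ ratPadicIntegers p := by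
    refine sum_mem fun q hq ↦ ?_
    obtain ⟨hqp, hqP⟩ := Finset.mem_erase.mp hq
    exact one_div_prime_mem_ratPadicIntegers (Finset.mem_filter.mp hqP).2.1 hqp
  have h_bernoulli : bernoulli (2 * k) = T - ∑ q ∈ P.erase p, (1 : ℚ) / q - 1 / p := by
    rw [← Finset.add_sum_erase _ _ hpP] at hT
    linear_combination -hT
  have h_inv : Rat.padicValuation p (1 / (p : ℚ)) = exp 1 := by
    rw [one_div, map_inv₀, Rat.padicValuation_self, ← exp_neg, neg_neg]
  have h_lt : Rat.padicValuation p (T - ∑ q ∈ P.erase p, (1 : ℚ) / q) <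
      Rat.padicValuation p (1 / (p : ℚ)) := by
    have h_one_lt : (1 : ℤᵐ⁰) < exp 1 := by rw [← exp_zero, exp_lt_exp]; exact zero_lt_one
    rw [h_inv]
    exact lt_of_le_of_lt (sub_mem (intCast_mem (ratPadicIntegers p) T) h_sum) h_one_lt
  rw [h_bernoulli, Valuation.map_sub_eq_of_lt_right _ h_lt, h_inv]

lemma padicValuation_topB (hk : k ≠ 0) (hp : p - 1 ∣ 2 * k) :
    Rat.padicValuation p (topB k) = exp 1 := by
  rw [← padicValuation_bernoulli_two_mul hk hp, topB]
  rcases abs_choice (bernoulli (2 * k)) with h | h <;> rw [h]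
  exact Valuation.map_neg _ _

lemma topB_ne_zero (k : ℕ) : topB k ≠ 0 := by
  rcases eq_or_ne k 0 with rfl | hk
  · simp [topB]
  · rw [← (Rat.padicValuation 2).ne_zero_iff, padicValuation_topB hk (one_dvd _)]
    exact exp_ne_zero

lemma topB_inv_mem_ratPadicIntegers (hk : k ≠ 0) (hp : p - 1 ∣ 2 * k) :
    (topB k)⁻¹ ∈ ratPadicIntegers p := by
  rw [Valuation.mem_integer_iff, map_inv₀, padicValuation_topB hk hp, ← exp_neg, ← exp_zero,
    exp_le_exp]
  exact neg_one_lt_zero.le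

lemma topB_add_div_mul_mem_ratPadicIntegers (hk : k ≠ 0) (hl : l ≠ 0)
    (hpk : p - 1 ∣ 2 * k) (hpl : p - 1 ∣ 2 * l) :
    (topB k + topB l) / (topB k * topB l) ∈ ratPadicIntegers p := by
  rw [← inv_add_inv (topB_ne_zero k) (topB_ne_zero l)]
  exact add_mem (topB_inv_mem_ratPadicIntegers hk hpk) (topB_inv_mem_ratPadicIntegers hl hpl)

end Bernoulli

section RiemannRoch

lemma one_add_inv_add_mul_mem_ratPadicIntegers {p : ℕ} [Fact p.Prime] {i : ℕ} (j : ℕ) {b q : ℚ}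
    (hb : b⁻¹ ∈ ratPadicIntegers p) (hi : i ≠ 0) (hq : q ∈ ratPadicIntegers p) :
    1 + 1 / b + (((p : ℚ) ^ j - 1) / ((p : ℚ) ^ i - 1) ^ 2) * q ∈ ratPadicIntegers p := by
  have h_quot : ((p : ℚ) ^ j - 1) / ((p : ℚ) ^ i - 1) ^ 2 ∈ ratPadicIntegers p := by
    rw [Valuation.mem_integer_iff, map_div₀, map_pow, padicValuation_prime_pow_sub_one hi, one_pow,
      div_one]
    exact sub_mem (pow_mem (natCast_mem (ratPadicIntegers p) p) j) (one_mem _)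
  rw [one_div]
  exact add_mem (add_mem (one_mem _) hb) (mul_mem h_quot hq)

lemma half_eq_sub_mul_of_eq_add {K : Type*} [Field K] [CharZero K] {n : ℕ} (hn : n ≠ 0)
    (h4 : 4 ∣ n) {c y d q t : K}
    (h : c = 2 * n * y + 1 / d ^ 2 * q * (n * t / 2 ^ n)) :
    c / 2 = n * y - (n / 4 : ℕ) / d ^ 2 * (1 / 2 * -q * (t / 2 ^ (n - 2))) := by
  have h_pow : (2 : K) ^ n = 4 * 2 ^ (n - 2) := by
    rw [← pow_mul_pow_sub 2 (show 2 ≤ n by omega)]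
    norm_num
  rw [h, h_pow, Nat.cast_div_charZero h4, Nat.cast_ofNat]
  ring

end RiemannRoch

/-- Let `n ≡ 4 (mod 8)` be positive and `τ, A, A_C` integers.  Set
`Q = (-B_{n/2} - B_{n/4}) / (B_{n/2} B_{n/4})`.  If
`A_C = 2n (1 + 1/B_{n/2} + ((2^(n-1)-1)/(2^(n/2)-1)^2) Q) A
      + (1/(2^(n/2)-1)^2) Q (n τ / 2^n)`
holds in `ℚ`, then `A_C` is even if and only if
`((B_{n/2} + B_{n/4})/(B_{n/2} B_{n/4})) * (τ / 2^(n-2))` is congruent to `0`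
modulo `2` as a 2-adic integer, i.e. iff
`(1/2) * ((B_{n/2} + B_{n/4})/(B_{n/2} B_{n/4})) * (τ / 2^(n-2))` has odd
denominator in lowest terms. -/
theorem even_iff_two_adic_zero_mod_two_mod_eight (n : ℕ) (hn : 0 < n)
    (h8 : n % 8 = 4)
    (τ A A_C : ℤ)
    (Q : ℚ)
    (hQ : Q = (-topB (n / 2) - topB (n / 4)) / (topB (n / 2) * topB (n / 4)))
    (heq : (A_C : ℚ) =
      2 * n * (1 + 1 / topB (n / 2)
          + ((2 ^ (n - 1) - 1) / (2 ^ (n / 2) - 1) ^ 2) * Q) * A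
        + (1 / (2 ^ (n / 2) - 1) ^ 2) * Q * (n * τ / 2 ^ n)) :
    Even A_C ↔ Odd (((1 / 2 : ℚ)
      * ((topB (n / 2) + topB (n / 4)) / (topB (n / 2) * topB (n / 4)))
      * (τ / 2 ^ (n - 2))).den) := by
  have h_neg_Q : -Q = (topB (n / 2) + topB (n / 4)) / (topB (n / 2) * topB (n / 4)) := by
    rw [hQ]; ring
  have hQ_mem : Q ∈ ratPadicIntegers 2 := by
    rw [← neg_mem_iff, h_neg_Q]
    exact topB_add_div_mul_mem_ratPadicIntegers (by omega) (by omega) (one_dvd _) (one_dvd _)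
  have h_unit : Rat.padicValuation 2 ((n / 4 : ℕ) / (2 ^ (n / 2) - 1) ^ 2) = 1 :=
    padicValuation_natCast_div_prime_pow_sub_one_pow 2 (by omega) (by omega)
  have h_int : n * ((1 + 1 / topB (n / 2) + ((2 ^ (n - 1) - 1) / (2 ^ (n / 2) - 1) ^ 2) * Q) * A) ∈
      ratPadicIntegers 2 :=
    mul_mem (natCast_mem _ n) <| mul_mem (one_add_inv_add_mul_mem_ratPadicIntegers _
      (topB_inv_mem_ratPadicIntegers (by omega) (one_dvd _)) (by omega) hQ_mem) (intCast_mem _ A)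
  rw [mul_assoc (2 * (n : ℚ))] at heq
  rw [← h_neg_Q]
  calc Even A_C ↔ (A_C : ℚ) / 2 ∈ ratPadicIntegers 2 :=
        even_iff_two_dvd.trans intCast_div_prime_mem_ratPadicIntegers_iff.symm
    _ ↔ (n / 4 : ℕ) / (2 ^ (n / 2) - 1) ^ 2 * (1 / 2 * -Q * (τ / 2 ^ (n - 2))) ∈
          ratPadicIntegers 2 := by
        rw [half_eq_sub_mul_of_eq_add hn.ne' (by omega) heq, sub_eq_add_neg,
          add_mem_cancel_left h_int, neg_mem_iff]
    _ ↔ 1 / 2 * -Q * (τ / 2 ^ (n - 2)) ∈ ratPadicIntegers 2 := mul_mem_ratPadicIntegers_iff h_unit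
    _ ↔ _ := mem_ratPadicIntegers_two_iff_odd_den
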